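/- Let u : ℝ² → ℝ be a smooth solution of Equation (E1): u_yy = u_y·u_xx − (u_x + u)·u_xy + u_x·u_y. Then the pair P := −e^{2x}·(u·u_x + u·u_xx − u_y), Q := −u·e^{2x}·u_xy is a conservation law: ∂P/∂y = ∂Q/∂x at every point of ℝ². -/

import Mathlib

/-- Partial derivative of a function on `ℝ²` in the direction `v`. -/
noncomputable def pd (v : ℝ × ℝ) (f : ℝ × ℝ → ℝ) : ℝ × ℝ → ℝ :=
  fun p => fderiv ℝ f p v

/-- Coordinates are `(x, y)`. -/
noncomputable def dx : (ℝ × ℝ → ℝ) → ℝ × ℝ → ℝ := pd (1, 0)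
noncomputable def dy : (ℝ × ℝ → ℝ) → ℝ × ℝ → ℝ := pd (0, 1)

theorem pd_smooth (v : ℝ × ℝ) {f : ℝ × ℝ → ℝ} (hf : ContDiff ℝ (⊤ : ℕ∞) f) :
    ContDiff ℝ (⊤ : ℕ∞) (pd v f) := by
  have h : ContDiff ℝ (⊤ : ℕ∞) (fderiv ℝ f) := hf.fderiv_right (by simp)
  exact h.clm_apply contDiff_const

theorem pd_comm (v w : ℝ × ℝ) {f : ℝ × ℝ → ℝ} (hf : ContDiff ℝ (⊤ : ℕ∞) f) (p : ℝ × ℝ) :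
    pd v (pd w f) p = pd w (pd v f) p := by
  have h : ContDiff ℝ (⊤ : ℕ∞) (fderiv ℝ f) := hf.fderiv_right (by simp)
  have hd : DifferentiableAt ℝ (fderiv ℝ f) p := h.differentiable (by simp) p
  have key : ∀ a b : ℝ × ℝ, pd a (pd b f) p = fderiv ℝ (fderiv ℝ f) p a b := by
    intro a b
    have := (hd.hasFDerivAt.clm_apply (hasFDerivAt_const b p)).fderiv
    change fderiv ℝ (fun q => fderiv ℝ f q b) p a = _
    rw [this]
    simp
  rw [key, key]
  have hs : IsSymmSndFDerivAt ℝ f p :=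
    hf.contDiffAt.isSymmSndFDerivAt (by simp; exact WithTop.coe_le_coe.2 le_top)
  exact hs v w

theorem exp_hasFDerivAt (p : ℝ × ℝ) :
    HasFDerivAt (fun q : ℝ × ℝ => Real.exp (2 * q.1))
      (Real.exp (2 * p.1) • ((2 : ℝ) • ContinuousLinearMap.fst ℝ ℝ ℝ)) p :=
  (hasFDerivAt_fst.const_mul (2 : ℝ)).exp

/-- For a smooth solution `u` of Equation (E1)
`u_yy = u_y·u_xx − (u_x + u)·u_xy + u_x·u_y`, the pair
`P = −e^{2x}·(u·u_x + u·u_xx − u_y)`, `Q = −u·e^{2x}·u_xy` is a conservation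
law: `∂P/∂y = ∂Q/∂x`. -/
theorem E1_conservation_law_exp (u : ℝ × ℝ → ℝ)
    (hu : ContDiff ℝ (⊤ : ℕ∞) u)
    (hsol : ∀ p : ℝ × ℝ,
      dy (dy u) p =
        dy u p * dx (dx u) p - (dx u p + u p) * dy (dx u) p + dx u p * dy u p) :
    ∀ p : ℝ × ℝ,
      dy (fun q => -Real.exp (2 * q.1) * (u q * dx u q + u q * dx (dx u) q - dy u q)) p
        = dx (fun q => -u q * Real.exp (2 * q.1) * dy (dx u) q) p := by
  intro p
  have hx := pd_smooth (1, 0) hu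
  have hy := pd_smooth (0, 1) hu
  have hxx := pd_smooth (1, 0) hx
  have hxy := pd_smooth (0, 1) hx
  have D : ∀ {f : ℝ × ℝ → ℝ}, ContDiff ℝ (⊤ : ℕ∞) f → HasFDerivAt f (fderiv ℝ f p) p :=
    fun h => (h.differentiable (by simp) p).hasFDerivAt
  have he := exp_hasFDerivAt p
  have h1 := (he.neg.mul ((((D hu).mul (D hx)).add ((D hu).mul (D hxx))).sub (D hy))).fderiv
  have h2 := (((D hu).neg.mul he).mul (D hxy)).fderiv
  have hc := pd_comm (0, 1) (1, 0) hx p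
  have hs := hsol p
  have e1 := DFunLike.congr_fun h1 ((0, 1) : ℝ × ℝ)
  have e2 := DFunLike.congr_fun h2 ((1, 0) : ℝ × ℝ)
  refine e1.trans (Eq.trans ?_ e2.symm)
  simp only [dx, dy] at hs
  simp only [ContinuousLinearMap.add_apply, ContinuousLinearMap.sub_apply,
    ContinuousLinearMap.neg_apply, ContinuousLinearMap.smul_apply, smul_eq_mul,
    ContinuousLinearMap.coe_fst', Pi.add_apply, Pi.mul_apply, Pi.sub_apply, Pi.neg_apply]
  have k : ∀ (v : ℝ × ℝ) (f : ℝ × ℝ → ℝ), fderiv ℝ f p v = pd v f p := fun _ _ => rfl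
  simp only [k]
  linear_combination Real.exp (2 * p.1) * hs - Real.exp (2 * p.1) * u p * hc
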